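/- Every natural number N can be written as the sum of three terms of the sequence (⌊n²/24⌋)_{n∈ℕ}, i.e., there exist natural numbers A, B, C with N = ⌊A²/24⌋ + ⌊B²/24⌋ + ⌊C²/24⌋. -/

import Mathlib

/-!
If `24 * N + 3 = x ^ 2 + y ^ 2 + z ^ 2`, then modulo 8 all of `x`, `y`, `z` are odd, and modulo 3
either all of them or none of them are divisible by 3. If they have no common factor, each square
is therefore `1` modulo 24, and replacing every square by its quotient by 24 lowers the sum to `N`.

So it suffices to write `m = 24 * N + 3` as a primitive sum of three squares, following Dirichlet.
A positive definite integral form of rank `n` is equivalent to one whose first coefficient `a`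
satisfies Hermite's bound `a ^ n ≤ (4 / 3) ^ (n * (n - 1) / 2) * det`; for determinant 1 and `n ≤ 5`
this forces `a = 1`, and splitting off a square repeatedly turns the form into a sum of squares.
For `n = 3` it remains to exhibit a positive definite form of determinant 1 that represents `m`.
A suitable one exists as soon as `-d` is a square modulo `d * m - 1` for some `d > 0`; Dirichlet's
theorem on primes in arithmetic progressions allows us to take `d * m - 1 = 2 * p` with `p` prime,
and quadratic reciprocity then shows that `-d` is a square modulo `2 * p`.
-/

open Matrix

section SchurComplement

variable {R : Type*} [CommRing R] {n : ℕ}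

/-- The Schur complement of the top left entry of a matrix, multiplied by that entry so that no
division is needed: integral matrices have an integral complement. -/
def schurComplement (M : Matrix (Fin (n + 1)) (Fin (n + 1)) R) : Matrix (Fin n) (Fin n) R :=
  of fun i j ↦ M 0 0 * M i.succ j.succ - M i.succ 0 * M 0 j.succ

/-- The block matrix `(1, x; 0, A)`, which extends a substitution `A` in the last `n` variables of a
quadratic form to a substitution in all `n + 1` variables. -/
def border (x : Fin n → R) (A : Matrix (Fin n) (Fin n) R) :
    Matrix (Fin (n + 1)) (Fin (n + 1)) R :=
  of (vecCons (vecCons 1 x) fun i ↦ vecCons 0 (A i))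

theorem det_of_vecCons_vecCons_zero (r : Fin (n + 1) → R) (A : Matrix (Fin n) (Fin n) R) :
    (of (vecCons r fun i ↦ vecCons 0 (A i))).det = r 0 * A.det := by
  rw [det_succ_column_zero, Fin.sum_univ_succ, Finset.sum_eq_zero fun i _ ↦ by simp]
  simp only [Fin.val_zero, pow_zero, one_mul, add_zero, of_apply, cons_val_zero]
  rfl

theorem det_border (x : Fin n → R) (A : Matrix (Fin n) (Fin n) R) :
    (border x A).det = A.det := by
  rw [border, det_of_vecCons_vecCons_zero, cons_val_zero, one_mul]

theorem pow_mul_det_eq_mul_det_schurComplement (M : Matrix (Fin (n + 1)) (Fin (n + 1)) R) :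
    M 0 0 ^ n * M.det = M 0 0 * (schurComplement M).det := by
  let c : Fin (n + 1) → R := vecCons 1 fun _ ↦ M 0 0
  have hscale : M 0 0 ^ n * M.det = (of fun i j ↦ c i * M i j).det := by
    simp [det_mul_column, c, Fin.prod_univ_succ]
  have heliminate : (of fun i j ↦ c i * M i j).det =
      (of (vecCons (M 0) fun i ↦ vecCons 0 (schurComplement M i))).det := by
    refine det_eq_of_forall_row_eq_smul_add_const (vecCons 0 fun i ↦ M i.succ 0) 0 rfl
      fun i j ↦ ?_
    cases i using Fin.cases <;> cases j using Fin.cases <;>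
      simp only [c, schurComplement, of_apply, cons_val_zero, cons_val_succ] <;> ring
  rw [hscale, heliminate, det_of_vecCons_vecCons_zero]

theorem isSymm_schurComplement {M : Matrix (Fin (n + 1)) (Fin (n + 1)) R} (hM : M.IsSymm) :
    (schurComplement M).IsSymm := by
  refine IsSymm.ext fun i j ↦ ?_
  simp only [schurComplement, of_apply, hM.apply i.succ j.succ, hM.apply i.succ 0,
    hM.apply 0 j.succ, mul_comm (M 0 _)]

theorem mul_dotProduct_mulVec_eq_sq_add {M : Matrix (Fin (n + 1)) (Fin (n + 1)) R}
    (hM : M.IsSymm) (x : Fin (n + 1) → R) :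
    M 0 0 * (x ⬝ᵥ M *ᵥ x) =
      (M 0 ⬝ᵥ x) ^ 2 + Fin.tail x ⬝ᵥ schurComplement M *ᵥ Fin.tail x := by
  have hrow (i : Fin n) : M 0 0 * (M *ᵥ x) i.succ =
      M 0 i.succ * (M 0 ⬝ᵥ x) + (schurComplement M *ᵥ Fin.tail x) i := by
    simp only [mulVec, dotProduct, schurComplement, of_apply, Fin.tail, Fin.sum_univ_succ, mul_add,
      sub_mul, Finset.mul_sum, Finset.sum_sub_distrib, mul_assoc, hM.apply 0 i.succ]
    ring
  calc M 0 0 * (x ⬝ᵥ M *ᵥ x)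
      = M 0 0 * x 0 * (M 0 ⬝ᵥ x) + ∑ i : Fin n, x i.succ * (M 0 0 * (M *ᵥ x) i.succ) := by
        simp only [dotProduct, mulVec, Fin.sum_univ_succ, mul_add, Finset.mul_sum, mul_assoc,
          mul_left_comm (M 0 0)]
    _ = (M 0 0 * x 0 + ∑ i : Fin n, M 0 i.succ * x i.succ) * (M 0 ⬝ᵥ x)
          + ∑ i : Fin n, x i.succ * (schurComplement M *ᵥ Fin.tail x) i := by
        simp only [hrow, mul_add, Finset.sum_add_distrib, add_mul, Finset.sum_mul, add_assoc,
          mul_left_comm (x _), mul_assoc]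
    _ = (M 0 ⬝ᵥ x) ^ 2 + Fin.tail x ⬝ᵥ schurComplement M *ᵥ Fin.tail x := by
        rw [← Fin.sum_univ_succ (fun i ↦ M 0 i * x i), sq]; rfl

theorem eq_transpose_border_mul_border {M : Matrix (Fin (n + 1)) (Fin (n + 1)) R}
    (hM : M.IsSymm) (h₁ : M 0 0 = 1) {A : Matrix (Fin n) (Fin n) R}
    (hA : schurComplement M = Aᵀ * A) :
    M = (border (Fin.tail (M 0)) A)ᵀ * border (Fin.tail (M 0)) A := by
  have hentry (i j : Fin n) : M i.succ j.succ =
      M 0 i.succ * M 0 j.succ + ∑ k, A k i * A k j := by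
    have hij : M 0 0 * M i.succ j.succ - M i.succ 0 * M 0 j.succ = ∑ k, A k i * A k j :=
      congr_fun₂ hA i j
    rwa [h₁, one_mul, hM.apply 0 i.succ, sub_eq_iff_eq_add'] at hij
  ext i j
  cases i using Fin.cases <;> cases j using Fin.cases <;>
    simp [border, mul_apply, Fin.sum_univ_succ, Fin.tail, h₁, hM.apply, hentry]

variable [LinearOrder R] [IsStrictOrderedRing R] [StarRing R] [TrivialStar R]

theorem posDef_schurComplement {M : Matrix (Fin (n + 1)) (Fin (n + 1)) R} (hM : M.PosDef) :
    (schurComplement M).PosDef := by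
  have hsymm := isHermitian_iff_isSymm.1 hM.isHermitian
  have h₀ : 0 < M 0 0 := hM.diag_pos
  refine .of_dotProduct_mulVec_pos (isHermitian_iff_isSymm.2 (isSymm_schurComplement hsymm))
    fun y hy ↦ ?_
  let x : Fin (n + 1) → R := vecCons (-(Fin.tail (M 0) ⬝ᵥ y)) (M 0 0 • y)
  have hx : x ≠ 0 := by
    obtain ⟨i, hi⟩ := Function.ne_iff.1 hy
    exact Function.ne_iff.2 ⟨i.succ, by simpa [x, h₀.ne'] using hi⟩
  have horth : M 0 ⬝ᵥ x = 0 := by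
    simp [x, dotProduct, Fin.sum_univ_succ, Fin.tail, Finset.mul_sum, mul_left_comm]
  have htail : Fin.tail x = M 0 0 • y := rfl
  have hpos := mul_pos h₀ (hM.dotProduct_mulVec_pos hx)
  rw [star_trivial, mul_dotProduct_mulVec_eq_sq_add hsymm, horth, htail, mulVec_smul,
    dotProduct_smul, smul_dotProduct] at hpos
  simpa [h₀] using hpos

theorem posDef_of_posDef_schurComplement {M : Matrix (Fin (n + 1)) (Fin (n + 1)) R}
    (hM : M.IsSymm) (h₀ : 0 < M 0 0) (hS : (schurComplement M).PosDef) : M.PosDef := by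
  refine .of_dotProduct_mulVec_pos (isHermitian_iff_isSymm.2 hM) fun x hx ↦ ?_
  rw [star_trivial]
  refine pos_of_mul_pos_right ?_ h₀.le
  rw [mul_dotProduct_mulVec_eq_sq_add hM]
  by_cases htail : Fin.tail x = 0
  · have hx₀ : x 0 ≠ 0 := fun hx₀ ↦ hx (funext (Fin.cases hx₀ (congr_fun htail)))
    have hrow : M 0 ⬝ᵥ x = M 0 0 * x 0 := by
      have hsucc (i : Fin n) : x i.succ = 0 := congr_fun htail i
      simp only [dotProduct, Fin.sum_univ_succ, hsucc, mul_zero, Finset.sum_const_zero, add_zero]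
    rw [htail, hrow, zero_dotProduct, add_zero]
    positivity
  · have hpos := hS.dotProduct_mulVec_pos htail
    rw [star_trivial] at hpos
    positivity

theorem posDef_fin_three {M : Matrix (Fin 3) (Fin 3) R} (hM : M.IsSymm) (h₁ : 0 < M 0 0)
    (h₂ : 0 < M 0 0 * M 1 1 - M 1 0 * M 0 1) (h₃ : 0 < M.det) : M.PosDef := by
  have hS := isSymm_schurComplement hM
  have hSS := isSymm_schurComplement hS
  have hdet : schurComplement (schurComplement M) 0 0 = M 0 0 * M.det := by
    simp only [schurComplement, of_apply, det_fin_three, Fin.succ_zero_eq_one, Fin.succ_one_eq_two]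
    ring
  have hempty : (schurComplement (schurComplement (schurComplement M))).PosDef :=
    .of_dotProduct_mulVec_pos (isHermitian_iff_isSymm.2 (isSymm_schurComplement hSS))
      fun x hx ↦ absurd (Subsingleton.elim x 0) hx
  exact posDef_of_posDef_schurComplement hM h₁ <| posDef_of_posDef_schurComplement hS h₂ <|
    posDef_of_posDef_schurComplement hSS (hdet ▸ mul_pos h₁ h₃) hempty

end SchurComplement

section Congruence

variable {m : Type*} [Fintype m] [DecidableEq m]

/-- Congruence of matrices over `R`: for symmetric matrices, this is equivalence over `R` of the
corresponding quadratic forms. -/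
def IsCongruent {R : Type*} [CommRing R] (M N : Matrix m m R) : Prop :=
  ∃ U : Matrix m m R, IsUnit U ∧ Uᵀ * M * U = N

namespace IsCongruent

section CommRing

variable {R : Type*} [CommRing R] {L M N : Matrix m m R}

theorem refl (M : Matrix m m R) : IsCongruent M M :=
  ⟨1, isUnit_one, by rw [transpose_one, one_mul, mul_one]⟩

theorem trans (hLM : IsCongruent L M) (hMN : IsCongruent M N) : IsCongruent L N := by
  obtain ⟨U, hU, rfl⟩ := hLM
  obtain ⟨V, hV, rfl⟩ := hMN
  exact ⟨U * V, hU.mul hV, by simp only [transpose_mul, mul_assoc]⟩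

theorem symm (h : IsCongruent M N) : IsCongruent N M := by
  obtain ⟨U, hU, rfl⟩ := h
  lift U to (Matrix m m R)ˣ using hU
  refine ⟨↑U⁻¹, U⁻¹.isUnit, ?_⟩
  calc (↑U⁻¹ : Matrix m m R)ᵀ * ((U : Matrix m m R)ᵀ * M * U) * ↑U⁻¹
      = (↑U * ↑U⁻¹ : Matrix m m R)ᵀ * M * (↑U * ↑U⁻¹) := by simp only [transpose_mul, mul_assoc]
    _ = M := by rw [U.mul_inv, transpose_one, one_mul, mul_one]

theorem posDef [PartialOrder R] [StarRing R] [TrivialStar R] (h : IsCongruent M N)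
    (hM : M.PosDef) : N.PosDef := by
  obtain ⟨U, hU, rfl⟩ := h
  simpa using hM.conjTranspose_mul_mul_same (mulVec_injective_of_isUnit hU)

theorem exists_eq_transpose_mul_self (h : IsCongruent M N)
    (hM : ∃ A : Matrix m m R, M = Aᵀ * A) : ∃ A : Matrix m m R, N = Aᵀ * A := by
  obtain ⟨U, -, rfl⟩ := h
  obtain ⟨A, rfl⟩ := hM
  exact ⟨A * U, by simp only [transpose_mul, mul_assoc]⟩

end CommRing

theorem det_eq {M N : Matrix m m ℤ} (h : IsCongruent M N) : N.det = M.det := by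
  obtain ⟨U, hU, rfl⟩ := h
  rw [det_mul, det_mul, det_transpose, mul_right_comm,
    Int.isUnit_mul_self ((isUnit_iff_isUnit_det U).1 hU), one_mul]

end IsCongruent

end Congruence

section Hermite

variable {n : ℕ}

theorem exists_two_mul_abs_mul_add_le {a : ℤ} (ha : 0 < a) (b : ℤ) :
    ∃ k : ℤ, 2 * |a * k + b| ≤ a := by
  have hlow := Int.mul_ediv_self_le (x := 2 * b + a) (k := 2 * a) (by positivity)
  have hupp := Int.lt_mul_ediv_self_add (x := 2 * b + a) (k := 2 * a) (by positivity)
  refine ⟨-((2 * b + a) / (2 * a)), ?_⟩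
  have habs : |2 * (a * -((2 * b + a) / (2 * a)) + b)| ≤ a :=
    abs_le.2 ⟨by linarith, by linarith⟩
  rwa [abs_mul, abs_two] at habs

theorem exists_isUnit_col_zero_eq_vecCons {R : Type*} [CommRing R]
    {V : Matrix (Fin (n + 1)) (Fin (n + 1)) R} (hV : IsUnit V) (k : R) :
    ∃ U : Matrix (Fin (n + 2)) (Fin (n + 2)) R, IsUnit U ∧ U.col 0 = vecCons k (V.col 0) := by
  refine ⟨(border (Pi.single 0 k) V).submatrix id (Equiv.swap 0 1), ?_, ?_⟩
  · rw [isUnit_iff_isUnit_det, det_permute', det_border]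
    exact ((Units.isUnit _).map (Int.castRingHom R)).mul ((isUnit_iff_isUnit_det V).1 hV)
  · ext i
    cases i using Fin.cases <;>
      simp only [border, col_apply, submatrix_apply, Equiv.swap_apply_left, of_apply, id,
        cons_val_zero, cons_val_succ, cons_val_one, Pi.single_eq_same]

theorem exists_isCongruent_minimal {M : Matrix (Fin (n + 1)) (Fin (n + 1)) ℤ} (hM : M.PosDef) :
    ∃ N, IsCongruent M N ∧ ∀ L, IsCongruent N L → N 0 0 ≤ L 0 0 := by
  obtain ⟨N, hMN, hmin⟩ := exists_minimalFor_of_wellFoundedLT (IsCongruent M)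
    (fun N ↦ (N 0 0).toNat) ⟨M, .refl M⟩
  refine ⟨N, hMN, fun L hNL ↦ le_of_not_gt fun hlt ↦ ?_⟩
  have hN : 0 < N 0 0 := (hMN.posDef hM).diag_pos
  have hle : (N 0 0).toNat ≤ (L 0 0).toNat :=
    hmin (hMN.trans hNL) (Int.toNat_le_toNat hlt.le)
  omega

/- Complete the first column of `V` to a primitive vector `w` by a new first coordinate that makes
`|(M w) 0| ≤ M 0 0 / 2`; then `M 0 0 ≤ wᵀ M w` and `M 0 0 * wᵀ M w ≤ M 0 0 ^ 2 / 4 + S 0 0`. -/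
theorem three_mul_sq_le_of_minimal {M : Matrix (Fin (n + 2)) (Fin (n + 2)) ℤ} (hM : M.PosDef)
    (hmin : ∀ N, IsCongruent M N → M 0 0 ≤ N 0 0) {S : Matrix (Fin (n + 1)) (Fin (n + 1)) ℤ}
    (hS : IsCongruent (schurComplement M) S) : 3 * M 0 0 ^ 2 ≤ 4 * S 0 0 := by
  obtain ⟨V, hV, rfl⟩ := hS
  have ha : 0 < M 0 0 := hM.diag_pos
  obtain ⟨k, hk⟩ := exists_two_mul_abs_mul_add_le ha (Fin.tail (M 0) ⬝ᵥ V.col 0)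
  obtain ⟨U, hU, hcol⟩ := exists_isUnit_col_zero_eq_vecCons hV k
  set w : Fin (n + 2) → ℤ := vecCons k (V.col 0)
  have hle : M 0 0 ≤ w ⬝ᵥ M *ᵥ w := by
    have hU₀ := hmin _ ⟨U, hU, rfl⟩
    rwa [mul_mul_apply, show Uᵀ 0 = w from hcol] at hU₀
  have hround : 4 * (M 0 ⬝ᵥ w) ^ 2 ≤ M 0 0 ^ 2 := by
    have hw : M 0 ⬝ᵥ w = M 0 0 * k + Fin.tail (M 0) ⬝ᵥ V.col 0 := by
      simp [w, dotProduct, Fin.sum_univ_succ, Fin.tail]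
    calc 4 * (M 0 ⬝ᵥ w) ^ 2 = (2 * |M 0 ⬝ᵥ w|) ^ 2 := by rw [mul_pow, sq_abs]; norm_num
      _ ≤ M 0 0 ^ 2 := by rw [hw]; gcongr
  have hform := mul_dotProduct_mulVec_eq_sq_add (isHermitian_iff_isSymm.1 hM.isHermitian) w
  have htail : (Vᵀ * schurComplement M * V) 0 0 =
      Fin.tail w ⬝ᵥ schurComplement M *ᵥ Fin.tail w := by
    rw [mul_mul_apply]; rfl
  rw [htail]
  nlinarith

theorem exists_isCongruent_hermite {M : Matrix (Fin (n + 1)) (Fin (n + 1)) ℤ} (hM : M.PosDef) :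
    ∃ N, IsCongruent M N ∧
      3 ^ (n + 1).choose 2 * N 0 0 ^ (n + 1) ≤ 4 ^ (n + 1).choose 2 * M.det := by
  induction n with
  | zero => exact ⟨M, .refl M, by simp⟩
  | succ n ih =>
    obtain ⟨N, hMN, hmin⟩ := exists_isCongruent_minimal hM
    have hN := hMN.posDef hM
    have ha : 0 < N 0 0 := hN.diag_pos
    obtain ⟨S, hS, hle⟩ := ih (posDef_schurComplement hN)
    have hdet : N 0 0 ^ n * M.det = (schurComplement N).det := by
      refine mul_left_cancel₀ ha.ne' ?_
      rw [← pow_mul_det_eq_mul_det_schurComplement, hMN.det_eq, pow_succ', mul_assoc]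
    have hsq := three_mul_sq_le_of_minimal hN hmin hS
    have hchoose : (n + 2).choose 2 = (n + 1) + (n + 1).choose 2 := by
      rw [Nat.choose_succ_succ' (n + 1) 1, Nat.choose_one_right]
    refine ⟨N, hMN, ?_⟩
    rw [hchoose]
    refine le_of_mul_le_mul_left ?_ (pow_pos ha n)
    set a := N 0 0
    calc a ^ n * (3 ^ (n + 1 + (n + 1).choose 2) * a ^ (n + 2))
        = 3 ^ (n + 1).choose 2 * (3 * a ^ 2) ^ (n + 1) := by ring
      _ ≤ 3 ^ (n + 1).choose 2 * (4 * S 0 0) ^ (n + 1) := by gcongr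
      _ = 4 ^ (n + 1) * (3 ^ (n + 1).choose 2 * S 0 0 ^ (n + 1)) := by ring
      _ ≤ 4 ^ (n + 1) * (4 ^ (n + 1).choose 2 * (schurComplement N).det) := by gcongr
      _ = a ^ n * (4 ^ (n + 1 + (n + 1).choose 2) * M.det) := by rw [← hdet]; ring

theorem exists_isCongruent_apply_zero_eq_one (hn : n < 5)
    {M : Matrix (Fin (n + 1)) (Fin (n + 1)) ℤ} (hM : M.PosDef) (hdet : M.det = 1) :
    ∃ N, IsCongruent M N ∧ N 0 0 = 1 := by
  obtain ⟨N, hMN, hle⟩ := exists_isCongruent_hermite hM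
  refine ⟨N, hMN, ?_⟩
  have hpos : 0 < N 0 0 := (hMN.posDef hM).diag_pos
  by_contra hne
  have htwo : 2 ≤ N 0 0 := by omega
  have habsurd : 3 ^ (n + 1).choose 2 * 2 ^ (n + 1) ≤ (4 ^ (n + 1).choose 2 * 1 : ℤ) :=
    le_trans (by gcongr) (hdet ▸ hle)
  interval_cases n <;> norm_num [Nat.choose] at habsurd

theorem exists_eq_transpose_mul_self_of_det_eq_one (hn : n ≤ 5)
    {M : Matrix (Fin n) (Fin n) ℤ} (hM : M.PosDef) (hdet : M.det = 1) :
    ∃ A : Matrix (Fin n) (Fin n) ℤ, M = Aᵀ * A := by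
  induction n with
  | zero => exact ⟨0, Subsingleton.elim _ _⟩
  | succ n ih =>
    obtain ⟨N, hMN, h₁⟩ := exists_isCongruent_apply_zero_eq_one hn hM hdet
    have hN := hMN.posDef hM
    have hdetS : (schurComplement N).det = 1 := by
      have hmul := pow_mul_det_eq_mul_det_schurComplement N
      rw [h₁, hMN.det_eq, hdet, one_pow, one_mul, one_mul] at hmul
      exact hmul.symm
    obtain ⟨A, hA⟩ := ih (by omega) (posDef_schurComplement hN) hdetS
    exact hMN.symm.exists_eq_transpose_mul_self
      ⟨_, eq_transpose_border_mul_border (isHermitian_iff_isSymm.1 hN.isHermitian) h₁ hA⟩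

end Hermite

section ThreeSquares

theorem exists_primitive_sq_add_sq_add_sq_eq_of_dvd {m d w : ℤ} (hd : 0 < d) (hdm : 1 < d * m)
    (hw : d * m - 1 ∣ w ^ 2 + d) :
    ∃ x y z : ℤ, x ^ 2 + y ^ 2 + z ^ 2 = m ∧ ∀ e, e ∣ x → e ∣ y → e ∣ z → IsUnit e := by
  obtain ⟨a, ha⟩ := hw
  let M : Matrix (Fin 3) (Fin 3) ℤ := !![d * m - 1, w, 0; w, a, 1; 0, 1, m]
  have hdet : M.det = 1 := by
    rw [det_fin_three]
    simp only [M, of_apply, cons_val]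
    linear_combination (-m) * ha
  have hM : M.PosDef := by
    refine posDef_fin_three (IsSymm.ext fun i j ↦ ?_) ?_ ?_ (hdet ▸ one_pos)
    · fin_cases i <;> fin_cases j <;> rfl
    · exact sub_pos.2 hdm
    · have hminor : M 0 0 * M 1 1 - M 1 0 * M 0 1 = d := by
        simp only [M, of_apply, cons_val]
        linear_combination -ha
      rwa [hminor]
  obtain ⟨A, hA⟩ := exists_eq_transpose_mul_self_of_det_eq_one (by norm_num) hM hdet
  have hentry (i j : Fin 3) : M i j = A 0 i * A 0 j + A 1 i * A 1 j + A 2 i * A 2 j := by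
    rw [hA, mul_apply, Fin.sum_univ_three]; rfl
  have hm : m = A 0 2 * A 0 2 + A 1 2 * A 1 2 + A 2 2 * A 2 2 := hentry 2 2
  have hone : 1 = A 0 1 * A 0 2 + A 1 1 * A 1 2 + A 2 1 * A 2 2 := hentry 1 2
  refine ⟨A 0 2, A 1 2, A 2 2, by simp only [sq, ← hm], fun e h₀ h₁ h₂ ↦ isUnit_of_dvd_one ?_⟩
  rw [hone]
  exact ((h₀.mul_left _).add (h₁.mul_left _)).add (h₂.mul_left _)

theorem exists_prime_two_mul_add_one_eq_mul {m : ℕ} (hm : m % 8 = 3) :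
    ∃ p d : ℕ, p.Prime ∧ p % 4 = 1 ∧ d % 8 = 1 ∧ 2 * p + 1 = d * m := by
  obtain ⟨k, rfl⟩ : ∃ k, m = 8 * k + 3 := ⟨m / 8, by omega⟩
  have hcop : (4 * k + 1).Coprime (4 * (8 * k + 3)) := by
    refine .mul_right (by simp) ?_
    rw [show 8 * k + 3 = 2 * (4 * k + 1) + 1 by ring]
    simp
  obtain ⟨p, hlt, hp, hmod⟩ := Nat.forall_exists_prime_gt_and_modEq (4 * k + 1) (by omega) hcop
  obtain ⟨j, hj⟩ := (Nat.modEq_iff_dvd' hlt.le).1 hmod.symm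
  have hpj : p = 4 * ((8 * k + 3) * j) + (4 * k + 1) := by
    rw [← mul_assoc]; omega
  exact ⟨p, 8 * j + 1, hp, by omega, by omega, by rw [hpj]; ring⟩

theorem jacobiSym_neg_eq_one_of_dvd {p d : ℕ} (hp : p % 4 = 1) (hd : d % 8 = 1)
    (hdvd : d ∣ 2 * p + 1) : jacobiSym (-d) p = 1 := by
  have hd_odd : Odd d := Nat.odd_iff.2 (by omega)
  have hp_odd : Odd p := Nat.odd_iff.2 (by omega)
  have htwo : jacobiSym 2 d = 1 := by
    rw [jacobiSym.at_two hd_odd, ZMod.χ₈_nat_mod_eight, hd]; rfl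
  have hmod : (2 * p : ℤ) ≡ -1 [ZMOD d] :=
    (Int.modEq_iff_dvd.2 (by rw [sub_neg_eq_add]; exact_mod_cast hdvd)).symm
  calc jacobiSym (-d) p
      = jacobiSym p d := by
        rw [jacobiSym.neg _ hp_odd, ZMod.χ₄_nat_one_mod_four hp, one_mul,
          jacobiSym.quadratic_reciprocity_one_mod_four' hd_odd hp]
    _ = jacobiSym (2 * p) d := by rw [jacobiSym.mul_left, htwo, one_mul]
    _ = jacobiSym (-1) d := jacobiSym.mod_left' hmod
    _ = 1 := by rw [jacobiSym.at_neg_one hd_odd, ZMod.χ₄_nat_one_mod_four (by omega)]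

theorem exists_dvd_sq_sub_of_jacobiSym_eq_one {p : ℕ} [Fact p.Prime] {a : ℤ}
    (h : jacobiSym a p = 1) : ∃ w : ℤ, (p : ℤ) ∣ w ^ 2 - a := by
  obtain ⟨s, hs⟩ := ZMod.isSquare_of_jacobiSym_eq_one h
  obtain ⟨w, rfl⟩ := ZMod.intCast_surjective s
  exact ⟨w, by rw [← ZMod.intCast_eq_intCast_iff_dvd_sub, hs, Int.cast_pow, sq]⟩

theorem exists_two_mul_dvd_sq_sub {n a w : ℤ} (hn : Odd n) (h : n ∣ w ^ 2 - a) :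
    ∃ v : ℤ, 2 * n ∣ v ^ 2 - a := by
  refine ⟨w + n * (w + a), (Int.isCoprime_two_left.2 hn).mul_dvd ?_ ?_⟩
  · rw [← Int.not_even_iff_odd] at hn
    simp only [← even_iff_two_dvd, Int.even_sub, Int.even_pow, Int.even_add, Int.even_mul]
    tauto
  · rw [show (w + n * (w + a)) ^ 2 - a = w ^ 2 - a + n * ((w + a) * (2 * w + n * (w + a))) by ring]
    exact h.add (dvd_mul_right _ _)

theorem exists_primitive_sq_add_sq_add_sq_eq_of_mod_eight {m : ℕ} (hm : m % 8 = 3) :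
    ∃ x y z : ℤ, x ^ 2 + y ^ 2 + z ^ 2 = m ∧ ∀ e, e ∣ x → e ∣ y → e ∣ z → IsUnit e := by
  obtain ⟨p, d, hp, hp4, hd8, hpd⟩ := exists_prime_two_mul_add_one_eq_mul hm
  have := Fact.mk hp
  obtain ⟨s, hs⟩ := exists_dvd_sq_sub_of_jacobiSym_eq_one
    (jacobiSym_neg_eq_one_of_dvd hp4 hd8 ⟨m, hpd⟩)
  have hp_odd : Odd (p : ℤ) := by exact_mod_cast Nat.odd_iff.2 (by omega : p % 2 = 1)
  obtain ⟨w, hw⟩ := exists_two_mul_dvd_sq_sub hp_odd hs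
  have hpd' : (2 * p + 1 : ℤ) = d * m := by exact_mod_cast hpd
  have hdm : (1 : ℤ) < d * m := by linarith [Int.natCast_pos.2 hp.pos]
  refine exists_primitive_sq_add_sq_add_sq_eq_of_dvd (d := d) (w := w) (by omega) hdm ?_
  rwa [← hpd', add_sub_cancel_right, ← sub_neg_eq_add]

theorem sq_eq_one_of_sum_eq_three_zmod_eight :
    ∀ x y z : ZMod 8, x ^ 2 + y ^ 2 + z ^ 2 = 3 → x ^ 2 = 1 ∧ y ^ 2 = 1 ∧ z ^ 2 = 1 := by
  decide

theorem eq_zero_or_sq_eq_one_of_sum_eq_zero_zmod_three :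
    ∀ x y z : ZMod 3, x ^ 2 + y ^ 2 + z ^ 2 = 0 →
      (x = 0 ∧ y = 0 ∧ z = 0) ∨ (x ^ 2 = 1 ∧ y ^ 2 = 1 ∧ z ^ 2 = 1) := by
  decide

theorem modEq_one_of_cast_zmod_eight_of_cast_zmod_three {n : ℤ} (h₈ : (n : ZMod 8) = 1)
    (h₃ : (n : ZMod 3) = 1) : n ≡ 1 [ZMOD 24] := by
  refine (Int.modEq_and_modEq_iff_modEq_mul (m := 8) (n := 3) (by decide)).1 ⟨?_, ?_⟩
  · exact (ZMod.intCast_eq_intCast_iff n 1 8).1 (h₈.trans Int.cast_one.symm)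
  · exact (ZMod.intCast_eq_intCast_iff n 1 3).1 (h₃.trans Int.cast_one.symm)

theorem sq_modEq_one_of_sum_modEq_three {x y z : ℤ} (h : x ^ 2 + y ^ 2 + z ^ 2 ≡ 3 [ZMOD 24])
    (hthree : ¬ (3 ∣ x ∧ 3 ∣ y ∧ 3 ∣ z)) :
    x ^ 2 ≡ 1 [ZMOD 24] ∧ y ^ 2 ≡ 1 [ZMOD 24] ∧ z ^ 2 ≡ 1 [ZMOD 24] := by
  have hsum₈ : (x ^ 2 + y ^ 2 + z ^ 2 : ZMod 8) = 3 := by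
    exact_mod_cast (ZMod.intCast_eq_intCast_iff _ 3 8).2 (h.of_dvd (by norm_num))
  have hsum₃ : (x ^ 2 + y ^ 2 + z ^ 2 : ZMod 3) = 0 := by
    exact_mod_cast (ZMod.intCast_eq_intCast_iff _ 0 3).2 ((h.of_dvd (by norm_num)).trans rfl)
  have hne : ¬ ((x : ZMod 3) = 0 ∧ (y : ZMod 3) = 0 ∧ (z : ZMod 3) = 0) := by
    simpa [ZMod.intCast_zmod_eq_zero_iff_dvd] using hthree
  have h₈ := sq_eq_one_of_sum_eq_three_zmod_eight _ _ _ hsum₈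
  have h₃ := (eq_zero_or_sq_eq_one_of_sum_eq_zero_zmod_three _ _ _ hsum₃).resolve_left hne
  simp only [← Int.cast_pow] at h₈ h₃
  exact ⟨modEq_one_of_cast_zmod_eight_of_cast_zmod_three h₈.1 h₃.1,
    modEq_one_of_cast_zmod_eight_of_cast_zmod_three h₈.2.1 h₃.2.1,
    modEq_one_of_cast_zmod_eight_of_cast_zmod_three h₈.2.2 h₃.2.2⟩

end ThreeSquares

theorem stmt_6 (N : ℕ) :
    ∃ A B C : ℕ, N = A ^ 2 / 24 + B ^ 2 / 24 + C ^ 2 / 24 := by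
  obtain ⟨x, y, z, hsum, hprim⟩ :=
    exists_primitive_sq_add_sq_add_sq_eq_of_mod_eight (m := 24 * N + 3) (by omega)
  push_cast at hsum
  have hmod : x ^ 2 + y ^ 2 + z ^ 2 ≡ 3 [ZMOD 24] := by
    simp [hsum, Int.ModEq]
  have hthree : ¬ (3 ∣ x ∧ 3 ∣ y ∧ 3 ∣ z) := fun ⟨hx, hy, hz⟩ ↦
    absurd (hprim 3 hx hy hz) (by decide)
  obtain ⟨hx, hy, hz⟩ := sq_modEq_one_of_sum_modEq_three hmod hthree
  refine ⟨x.natAbs, y.natAbs, z.natAbs, ?_⟩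
  zify
  simp only [sq_abs]
  unfold Int.ModEq at hx hy hz
  omega
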